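/- Let σ be the endomorphism of ℤ⁵ (with standard basis e₁, e₂, e₃, e₄, e₅) defined by σ(e₁) = 4e₁ − e₂ − e₃ − e₄ + 2e₅, σ(e₂) = 2e₁ − e₂ − e₃ − e₅, σ(e₃) = 2e₁ − e₃ − e₄ − e₅, σ(e₄) = 2e₁ − e₂ − e₄ − e₅, σ(e₅) = 3e₁ − 2e₅ (so σ³ = id). Define φ' : ℤ/3ℤ → ℤ⁵ by φ'(0) = 0, φ'(1) = e₂ − e₄, φ'(2) = e₂ − e₃. Then φ' is a 1-cocycle for the action of the cyclic group ℤ/3ℤ on ℤ⁵ in which the generator acts by σ (i.e. φ'(m + n) = φ'(m) + σ^m(φ'(n)) for all m, n ∈ ℤ/3ℤ), and φ' is not a coboundary: there is no v ∈ ℤ⁵ with φ'(1) = σ(v) − v. -/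

import Mathlib

/-- The map `φ'` with `φ'(0) = 0`, `φ'(1) = e₂ - e₄`, `φ'(2) = e₂ - e₃` is a 1-cocycle for
the action of `ℤ/3ℤ` on `ℤ⁵` in which the generator acts by `σ`, and it is not a
coboundary. -/
theorem explicit_cocycle_is_nontrivial
    (σ : (Fin 5 → ℤ) →ₗ[ℤ] (Fin 5 → ℤ))
    (h₁ : σ (Pi.single 0 1) = ![4, -1, -1, -1, 2])
    (h₂ : σ (Pi.single 1 1) = ![2, -1, -1, 0, -1])
    (h₃ : σ (Pi.single 2 1) = ![2, 0, -1, -1, -1])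
    (h₄ : σ (Pi.single 3 1) = ![2, -1, 0, -1, -1])
    (h₅ : σ (Pi.single 4 1) = ![3, 0, 0, 0, -2])
    (φ : ZMod 3 → (Fin 5 → ℤ))
    (hφ₀ : φ 0 = 0)
    (hφ₁ : φ 1 = ![0, 1, 0, -1, 0])
    (hφ₂ : φ 2 = ![0, 1, -1, 0, 0]) :
    (∀ m n : ZMod 3, φ (m + n) = φ m + (σ ^ m.val) (φ n)) ∧
    ¬∃ v : Fin 5 → ℤ, φ 1 = σ v - v := by
  have σ_apply (v : Fin 5 → ℤ) : σ v =
      ![4 * v 0 + 2 * v 1 + 2 * v 2 + 2 * v 3 + 3 * v 4, -v 0 - v 1 - v 3,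
        -v 0 - v 1 - v 2, -v 0 - v 2 - v 3, 2 * v 0 - v 1 - v 2 - v 3 - 2 * v 4] := by
    rw [LinearMap.pi_apply_eq_sum_univ σ v]
    have single_eq (i : Fin 5) : (fun j => if i = j then (1 : ℤ) else 0) = Pi.single i 1 := by
      ext j
      simp [Pi.single_apply, eq_comm]
    simp only [single_eq, Fin.sum_univ_five, h₁, h₂, h₃, h₄, h₅]
    ext j
    fin_cases j <;> simp <;> ring
  refine ⟨fun m n => ?_, ?_⟩
  · have one_add_one : (1 + 1 : ZMod 3) = 2 := rfl
    have one_add_two : (1 + 2 : ZMod 3) = 0 := rfl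
    have two_add_one : (2 + 1 : ZMod 3) = 0 := rfl
    have two_add_two : (2 + 2 : ZMod 3) = 1 := rfl
    have val_one : (1 : ZMod 3).val = 1 := rfl
    have val_two : (2 : ZMod 3).val = 2 := rfl
    have cases_three (k : ZMod 3) : k = 0 ∨ k = 1 ∨ k = 2 := by
      revert k
      decide
    obtain rfl | rfl | rfl := cases_three m <;> obtain rfl | rfl | rfl := cases_three n <;>
      simp [one_add_one, one_add_two, two_add_one, two_add_two, val_one, val_two, hφ₀, hφ₁, hφ₂,
        pow_two, σ_apply]
    all_goals decide
  · rintro ⟨v, hv⟩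
    rw [hφ₁, σ_apply] at hv
    have hv₀ := congrFun hv 0
    have hv₁ := congrFun hv 1
    have hv₂ := congrFun hv 2
    have hv₃ := congrFun hv 3
    have hv₄ := congrFun hv 4
    simp at hv₀ hv₁ hv₂ hv₃ hv₄
    omega
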